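/- Let X be a geodesic, semi-locally simply connected metric space and let α : S¹_{|α|} → X be a geodesic circle. Then there exists ρ > 0 such that every loop β : S¹ → X whose image is contained in the open ρ-neighborhood of α(S¹) is freely homotopic to a k-fold concatenation of α for some k ∈ ℤ. -/

import Mathlib

open Set Metric
open scoped ENNReal

noncomputable section

section Loops

/-- A loop in a space `X`: a continuous map from the circle `ℝ/ℤ`
(of circumference 1). -/
abbrev MLoop (X : Type*) [TopologicalSpace X] : Type _ := C(AddCircle (1 : ℝ), X)

variable {X : Type*} [MetricSpace X]

/-- The length of a loop: its total variation over one period. -/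
def loopLength (γ : MLoop X) : ℝ≥0∞ :=
  eVariationOn (fun t : ℝ => γ (t : AddCircle (1 : ℝ))) (Set.Icc 0 1)

/-- Two loops are freely homotopic through the set `U`. -/
def FreelyHomotopicIn (U : Set X) (β γ : MLoop X) : Prop :=
  ∃ H : ContinuousMap.Homotopy β γ, Set.range ⇑H ⊆ U

/-- Two loops are freely homotopic (in all of `X`). -/
def FreelyHomotopic (β γ : MLoop X) : Prop :=
  FreelyHomotopicIn Set.univ β γ

/-- The reversed loop `α⁻`. -/
def loopReverse (γ : MLoop X) : MLoop X :=
  γ.comp ⟨fun t => -t, continuous_neg⟩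

/-- The `k`-fold concatenation of a loop, realized as the composition with the
degree-`k` self-map of the circle (the constant loop for `k = 0`, and the
`|k|`-fold concatenation of the reverse for `k < 0`). -/
def loopPow (γ : MLoop X) (k : ℤ) : MLoop X :=
  γ.comp ⟨fun t => k • t, continuous_zsmul k⟩

/-- A loop is null-homotopic (contractible) in `U` if it is freely homotopic in `U`
to a constant loop. -/
def NullHomotopicIn (U : Set X) (γ : MLoop X) : Prop :=
  ∃ x : X, FreelyHomotopicIn U γ (ContinuousMap.const _ x)

/-- `f` parametrizes a geodesic from `x` to `y` on the interval `[0, dist x y]`: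
it is an isometric embedding of this interval sending `0 ↦ x`, `dist x y ↦ y`. -/
def IsGeodesicSegment (f : ℝ → X) (x y : X) : Prop :=
  f 0 = x ∧ f (dist x y) = y ∧
    ∀ s ∈ Set.Icc (0 : ℝ) (dist x y), ∀ t ∈ Set.Icc (0 : ℝ) (dist x y),
      dist (f s) (f t) = |s - t|

/-- A metric space is geodesic if any two points are joined by a geodesic. -/
def GeodesicSpace (X : Type*) [MetricSpace X] : Prop :=
  ∀ x y : X, ∃ f : ℝ → X, IsGeodesicSegment f x y

/-- `X` is semi-locally simply connected: every point has a ball in which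
every loop is null-homotopic in `X`. -/
def SemiLocallySimplyConnected (X : Type*) [MetricSpace X] : Prop :=
  ∀ x : X, ∃ δ > (0 : ℝ), ∀ γ : MLoop X, Set.range ⇑γ ⊆ Metric.ball x δ →
    NullHomotopicIn Set.univ γ

/-- `α` is a geodesic circle of circumference `c` in `X`: as a map from the circle
of circumference `1` it rescales the (geodesic) circle distance by the factor `c`;
equivalently it corresponds to an isometric embedding of `S¹_c` into `X`. -/
def IsGeodesicCircle (α : MLoop X) (c : ℝ) : Prop :=
  0 < c ∧ ∀ s t : AddCircle (1 : ℝ), dist (α s) (α t) = c * dist s t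

/-- A bottleneck loop: a loop of finite length that is a shortest representative
of its free (unoriented) homotopy class within some neighbourhood of its image. -/
def IsBottleneckLoop (α : MLoop X) : Prop :=
  loopLength α ≠ ⊤ ∧
  ∃ U : Set X, IsOpen U ∧ Set.range ⇑α ⊆ U ∧
    ∀ β : MLoop X, Set.range ⇑β ⊆ U →
      (FreelyHomotopicIn U β α ∨ FreelyHomotopicIn U β (loopReverse α)) →
      loopLength α ≤ loopLength β

/-- A set is geodesically convex if every geodesic between its points lies in it. -/
def GeodesicallyConvex (N : Set X) : Prop :=
  ∀ x ∈ N, ∀ y ∈ N, ∀ f : ℝ → X, IsGeodesicSegment f x y →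
    ∀ t ∈ Set.Icc (0 : ℝ) (dist x y), f t ∈ N

/-- The perimeter of a triple: the length of any of its fillings. -/
def triplePerim (x₁ x₂ x₃ : X) : ℝ := dist x₁ x₂ + dist x₂ x₃ + dist x₃ x₁

/-- The diameter of a triple of points. -/
def tripleDiam (x₁ x₂ x₃ : X) : ℝ := max (dist x₁ x₂) (max (dist x₂ x₃) (dist x₃ x₁))

/-- The diameter of a quadruple of points. -/
def quadDiam (x₁ x₂ x₃ x₄ : X) : ℝ :=
  max (tripleDiam x₁ x₂ x₃) (max (dist x₁ x₄) (max (dist x₂ x₄) (dist x₃ x₄)))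

/-- `f : ℝ → X` traverses a filling of the (oriented) triple `(x₁, x₂, x₃)`:
it concatenates geodesics from `x₁` to `x₂`, from `x₂` to `x₃` and from `x₃` to
`x₁`, parametrized by arc length on `[0, triplePerim x₁ x₂ x₃]`. -/
def IsFillingFun (x₁ x₂ x₃ : X) (f : ℝ → X) : Prop :=
  f 0 = x₁ ∧ f (dist x₁ x₂) = x₂ ∧ f (dist x₁ x₂ + dist x₂ x₃) = x₃ ∧
  f (triplePerim x₁ x₂ x₃) = x₁ ∧
  (∀ s ∈ Set.Icc (0 : ℝ) (dist x₁ x₂), ∀ t ∈ Set.Icc (0 : ℝ) (dist x₁ x₂),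
    dist (f s) (f t) = |s - t|) ∧
  (∀ s ∈ Set.Icc (dist x₁ x₂) (dist x₁ x₂ + dist x₂ x₃),
    ∀ t ∈ Set.Icc (dist x₁ x₂) (dist x₁ x₂ + dist x₂ x₃), dist (f s) (f t) = |s - t|) ∧
  (∀ s ∈ Set.Icc (dist x₁ x₂ + dist x₂ x₃) (triplePerim x₁ x₂ x₃),
    ∀ t ∈ Set.Icc (dist x₁ x₂ + dist x₂ x₃) (triplePerim x₁ x₂ x₃),
    dist (f s) (f t) = |s - t|)

/-- The loop `L` is a filling of the oriented triple `(x₁, x₂, x₃)`. -/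
def IsFilling (x₁ x₂ x₃ : X) (L : MLoop X) : Prop :=
  ∃ f : ℝ → X, IsFillingFun x₁ x₂ x₃ f ∧
    ∀ t ∈ Set.Icc (0 : ℝ) 1, L (t : AddCircle (1 : ℝ)) = f (triplePerim x₁ x₂ x₃ * t)

/-- A triple of points of `N` is circumventing (w.r.t. the loop `α`) if each of its
fillings lying in `N` is freely homotopic to `α` or to `α⁻`. -/
def Circumventing (N : Set X) (α : MLoop X) (x₁ x₂ x₃ : X) : Prop :=
  x₁ ∈ N ∧ x₂ ∈ N ∧ x₃ ∈ N ∧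
  ∀ L : MLoop X, IsFilling x₁ x₂ x₃ L → Set.range ⇑L ⊆ N →
    (FreelyHomotopic L α ∨ FreelyHomotopic L (loopReverse α))

/-- The (oriented) triple `(x₁, x₂, x₃)` has winding number `k` with respect to the
oriented loop `α`: some filling of it is freely homotopic to the `k`-fold
concatenation of `α`. -/
def HasTripleWinding (α : MLoop X) (x₁ x₂ x₃ : X) (k : ℤ) : Prop :=
  ∃ L : MLoop X, IsFilling x₁ x₂ x₃ L ∧ FreelyHomotopic L (loopPow α k)

end Loops

section Helpers

open CategoryTheory unitInterval

/-- homotopy class of a path -/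
def pcl {Y : Type*} [TopologicalSpace Y] {x y : Y} (p : Path x y) :
    (⟨x⟩ : FundamentalGroupoid Y) ⟶ ⟨y⟩ :=
  Path.Homotopic.Quotient.mk p

theorem pcl_trans {Y : Type*} [TopologicalSpace Y] {x y z : Y} (p : Path x y) (q : Path y z) :
    pcl (p.trans q) = pcl p ≫ pcl q := rfl

theorem pcl_refl {Y : Type*} [TopologicalSpace Y] (x : Y) :
    pcl (Path.refl x) = 𝟙 _ := rfl

theorem pcl_symm {Y : Type*} [TopologicalSpace Y] {x y : Y} (p : Path x y) :
    pcl p.symm = Groupoid.inv (pcl p) := rfl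

theorem pcl_eq {Y : Type*} [TopologicalSpace Y] {x y : Y} {p q : Path x y} :
    pcl p = pcl q ↔ p.Homotopic q := Path.Homotopic.Quotient.eq

theorem toLoop_exists {Y : Type*} [TopologicalSpace Y] (φ : C(I, Y)) (h : φ 0 = φ 1) :
    ∃ L : C(AddCircle (1 : ℝ), Y), ∀ t : I, L ((t : ℝ) : AddCircle (1 : ℝ)) = φ t := by
  let f : ℝ → Y := fun t => φ (Set.projIcc 0 1 zero_le_one t)
  have hf : Continuous f := φ.continuous.comp continuous_projIcc
  have h0 : f 0 = φ 0 := by simp [f]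
  have h1 : f 1 = φ 1 := by simp [f]
  have : Fact ((0:ℝ) < 1) := ⟨one_pos⟩
  refine ⟨⟨AddCircle.liftIco 1 0 f, AddCircle.liftIco_zero_continuous (by rw [h0, h1, h])
    hf.continuousOn⟩, fun t => ?_⟩
  change AddCircle.liftIco 1 0 f _ = _
  rcases eq_or_lt_of_le t.2.2 with ht | ht
  · have : t = 1 := Subtype.ext ht
    subst this
    have : (((1 : I) : ℝ) : AddCircle (1 : ℝ)) = ((0 : ℝ) : AddCircle (1 : ℝ)) := by
      simp
    rw [this, AddCircle.liftIco_zero_coe_apply (by simp), h0, h]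
  · rw [AddCircle.liftIco_zero_coe_apply ⟨t.2.1, ht⟩]
    simp [f]

theorem circle_rep (z : AddCircle (1 : ℝ)) : ∃ t : I, ((t : ℝ) : AddCircle (1 : ℝ)) = z := by
  have : Fact ((0:ℝ) < 1) := ⟨one_pos⟩
  have : z ∈ ((↑) : ℝ → AddCircle (1 : ℝ)) '' Icc 0 (0 + 1) := by
    rw [AddCircle.coe_image_Icc_eq]; trivial
  obtain ⟨t, ht, rfl⟩ := this
  exact ⟨⟨t, by simpa using ht⟩, rfl⟩

theorem loop_ext {Y : Type*} [TopologicalSpace Y] {L M : C(AddCircle (1 : ℝ), Y)}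
    (h : ∀ t : I, L ((t : ℝ) : AddCircle (1 : ℝ)) = M ((t : ℝ) : AddCircle (1 : ℝ))) : L = M := by
  ext z
  obtain ⟨t, rfl⟩ := circle_rep z
  exact h t

variable {X : Type*} [MetricSpace X]

theorem FH_iff {β γ : MLoop X} : FreelyHomotopic β γ ↔ ContinuousMap.Homotopic β γ :=
  ⟨fun ⟨H, _⟩ => ⟨H⟩, fun ⟨H⟩ => ⟨H, subset_univ _⟩⟩

/-- a square with matching sides gives a free homotopy -/
theorem FH_of_square (F : C(I × I, X)) (hF : ∀ s, F (s, 0) = F (s, 1)) (β γ : MLoop X)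
    (hβ : ∀ t : I, β ((t : ℝ) : AddCircle (1 : ℝ)) = F (0, t))
    (hγ : ∀ t : I, γ ((t : ℝ) : AddCircle (1 : ℝ)) = F (1, t)) :
    ContinuousMap.Homotopic β γ := by
  let G : C(I, C(I, X)) := (F.comp ContinuousMap.prodSwap).curry
  obtain ⟨L, hL⟩ := toLoop_exists G (by ext s; exact hF s)
  let K : C(AddCircle (1 : ℝ) × I, X) := L.uncurry
  refine ⟨⟨K.comp ContinuousMap.prodSwap, fun z => ?_, fun z => ?_⟩⟩
  · obtain ⟨t, rfl⟩ := circle_rep z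
    change L ((t : ℝ) : AddCircle (1 : ℝ)) 0 = _
    rw [hL, hβ]; rfl
  · obtain ⟨t, rfl⟩ := circle_rep z
    change L ((t : ℝ) : AddCircle (1 : ℝ)) 1 = _
    rw [hL, hγ]; rfl

theorem FH_of_path {a : X} {p q : Path a a} (h : p.Homotopic q) (β γ : MLoop X)
    (hβ : ∀ t : I, β ((t : ℝ) : AddCircle (1 : ℝ)) = p t)
    (hγ : ∀ t : I, γ ((t : ℝ) : AddCircle (1 : ℝ)) = q t) :
    ContinuousMap.Homotopic β γ := by
  obtain ⟨H⟩ := h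
  refine FH_of_square H.toContinuousMap (fun s => ?_) β γ (fun t => ?_) (fun t => ?_)
  · change H (s, 0) = H (s, 1)
    rw [H.source, H.target]
  · rw [hβ]
    exact (H.apply_zero t).symm
  · rw [hγ]
    exact (H.apply_one t).symm

/-- the tail of a path -/
def tailPath {a b : X} (κ : Path a b) (s : I) : Path (κ s) b where
  toFun t := κ (max s t)
  continuous_toFun := by fun_prop
  source' := by
    change κ (max s 0) = κ s
    rw [max_eq_left (unitInterval.nonneg' (t := s))]
  target' := by
    change κ (max s 1) = b
    rw [max_eq_right (unitInterval.le_one' (t := s)), κ.target]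

theorem FH_conj {a b : X} (κ : Path a b) (q : Path b b) (β γ : MLoop X)
    (hβ : ∀ t : I, β ((t : ℝ) : AddCircle (1 : ℝ)) = ((κ.trans q).trans κ.symm) t)
    (hγ : ∀ t : I, γ ((t : ℝ) : AddCircle (1 : ℝ)) = q t) :
    ContinuousMap.Homotopic β γ := by
  let P : ∀ s : I, Path (κ s) (κ s) := fun s =>
    ((tailPath κ s).trans q).trans (tailPath κ s).symm
  have hc : Continuous ↿(tailPath κ) := by
    change Continuous fun x : I × I => κ (max x.1 x.2)
    fun_prop
  have hP : Continuous ↿P := by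
    apply Path.trans_continuous_family
    · apply Path.trans_continuous_family _ hc
      change Continuous fun x : I × I => q x.2
      fun_prop
    · exact Path.symm_continuous_family _ hc
  obtain ⟨δ, hδ⟩ := toLoop_exists (((Path.refl b).trans q).trans (Path.refl b).symm).toContinuousMap
    (by simp)
  have e1 : ContinuousMap.Homotopic β δ := by
    refine FH_of_square ⟨↿P, hP⟩ (fun s => ?_) β δ (fun t => ?_) (fun t => ?_)
    · change P s 0 = P s 1
      simp
    · rw [hβ]
      change _ = P 0 t
      simp only [P, Path.trans_apply, Path.symm_apply, tailPath]
      simp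
    · rw [hδ]
      change _ = P 1 t
      simp only [P, Path.trans_apply, Path.symm_apply, tailPath, Path.coe_toContinuousMap]
      simp [max_eq_left unitInterval.le_one']
  have e2 : ContinuousMap.Homotopic δ γ := by
    refine FH_of_path (p := ((Path.refl b).trans q).trans (Path.refl b).symm) (q := q) ?_ δ γ
      hδ hγ
    rw [← pcl_eq, pcl_trans, pcl_trans, pcl_symm, pcl_refl]
    simp
  exact e1.trans e2

theorem FH_main {a b c d : X} (p : Path a b) (q : Path c d) (κ : Path a c) (τ : Path b d)
    (hab : a = b) (hcd : c = d) (hκτ : ∀ s, κ s = τ s)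
    (h : pcl p ≫ pcl τ = pcl κ ≫ pcl q) (β γ : MLoop X)
    (hβ : ∀ t : I, β ((t : ℝ) : AddCircle (1 : ℝ)) = p t)
    (hγ : ∀ t : I, γ ((t : ℝ) : AddCircle (1 : ℝ)) = q t) :
    ContinuousMap.Homotopic β γ := by
  subst hab hcd
  have : κ = τ := by ext s; exact hκτ s
  subst this
  obtain ⟨δ, hδ⟩ := toLoop_exists ((κ.trans q).trans κ.symm).toContinuousMap (by simp)
  refine ContinuousMap.Homotopic.trans (FH_of_path (p := p) ?_ β δ hβ hδ) (FH_conj κ q δ γ hδ hγ)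
  rw [← pcl_eq, pcl_trans, pcl_trans, pcl_symm, ← h]
  simp

theorem pcl_null {a b x w : X} (r : Path a b) (e0 : Path a w) (e1 : Path b w) (k : Path w w)
    (r' : Path x x) (he : ∀ s, e0 s = e1 s) (hk : ∀ s, k s = w)
    (h : pcl r ≫ pcl e1 = pcl e0 ≫ pcl k) (hr : ∀ s, r' s = r s) : pcl r' = 𝟙 _ := by
  have h0 : x = a := by simpa using hr 0
  have h1 : x = b := by simpa using hr 1
  subst h0
  subst h1
  have h2 : e0 = e1 := by ext s; exact he s
  have h3 : r' = r := by ext s; exact hr s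
  have h4 : k = Path.refl w := by ext s; exact hk s
  subst h2 h3 h4
  rw [pcl_refl, Category.comp_id] at h
  rw [← cancel_mono (pcl e0), h, Category.id_comp]

/-- paths with image in a good ball are homotopic -/
theorem small_paths {z : X} {δ : ℝ} (hz : ∀ γ : MLoop X, Set.range ⇑γ ⊆ Metric.ball z δ →
    NullHomotopicIn Set.univ γ) {x y : X} (p q : Path x y) (hp : ∀ t, p t ∈ Metric.ball z δ)
    (hq : ∀ t, q t ∈ Metric.ball z δ) : pcl p = pcl q := by
  obtain ⟨L, hL⟩ := toLoop_exists (p.trans q.symm).toContinuousMap (by simp)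
  have hr : Set.range ⇑L ⊆ Metric.ball z δ := by
    rintro _ ⟨w, rfl⟩
    obtain ⟨t, rfl⟩ := circle_rep w
    rw [hL]
    change (p.trans q.symm) t ∈ _
    rw [Path.trans_apply]
    split_ifs
    · exact hp _
    · exact hq _
  obtain ⟨w, H, -⟩ := hz L hr
  let ℓ : Path (((0 : I) : ℝ) : AddCircle (1 : ℝ)) (((1 : I) : ℝ) : AddCircle (1 : ℝ)) :=
    { toFun := fun t => ((t : ℝ) : AddCircle (1 : ℝ))
      continuous_toFun := by
        exact (AddCircle.continuous_mk' 1).comp continuous_subtype_val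
      source' := rfl
      target' := rfl }
  have key := pcl_eq.2 (Path.Homotopic.map_trans_evalAt H ℓ)
  rw [pcl_trans, pcl_trans] at key
  have h1 : pcl (p.trans q.symm) = 𝟙 _ := by
    refine pcl_null _ _ _ _ _ (fun s => ?_) (fun s => ?_) key (fun s => ?_)
    · change H (s, _) = H (s, _)
      have : (((1 : I) : ℝ) : AddCircle (1 : ℝ)) = (((0 : I) : ℝ) : AddCircle (1 : ℝ)) := by
        simp
      rw [this]
    · rfl
    · exact (hL s).symm
  rw [pcl_trans, pcl_symm] at h1
  rw [← cancel_mono (Groupoid.inv (pcl q)), h1]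
  simp

/-- straight path pushed by a map -/
def linePath (s t : ℝ) : Path s t where
  toFun r := s + r * (t - s)
  continuous_toFun := by fun_prop
  source' := by simp
  target' := by simp

def segPath (f : C(ℝ, X)) (s t : ℝ) : Path (f s) (f t) := (linePath s t).map f.continuous

theorem segPath_trans (f : C(ℝ, X)) (s t u : ℝ) :
    pcl (segPath f s t) ≫ pcl (segPath f t u) = pcl (segPath f s u) := by
  rw [← pcl_trans, pcl_eq]
  unfold segPath
  rw [← Path.map_trans]
  exact Path.Homotopic.map (SimplyConnectedSpace.paths_homotopic _ _) f

theorem segPath_self (f : C(ℝ, X)) (s : ℝ) : pcl (segPath f s s) = 𝟙 _ := by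
  rw [← pcl_refl]
  congr 1
  ext t
  change f (s + t * (s - s)) = f s
  simp

theorem linePath_bound (s t : ℝ) (r : I) : |linePath s t r - s| ≤ |t - s| := by
  change |s + r * (t - s) - s| ≤ _
  rw [add_sub_cancel_left, abs_mul, abs_of_nonneg r.2.1]
  exact mul_le_of_le_one_left (abs_nonneg _) r.2.2

theorem geo_path (hgeo : GeodesicSpace X) (x y : X) :
    ∃ p : Path x y, ∀ t, dist (p t) y ≤ dist x y := by
  obtain ⟨f, h0, h1, hf⟩ := hgeo x y
  have hm : ∀ t : I, (t : ℝ) * dist x y ∈ Icc (0 : ℝ) (dist x y) := fun t =>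
    ⟨mul_nonneg t.2.1 dist_nonneg, mul_le_of_le_one_left dist_nonneg t.2.2⟩
  have hc : Continuous fun t : I => f (t * dist x y) := by
    have : LipschitzWith ⟨dist x y, dist_nonneg⟩ fun t : I => f (t * dist x y) := by
      refine LipschitzWith.of_dist_le_mul fun s t => ?_
      rw [hf _ (hm s) _ (hm t), ← sub_mul, abs_mul, abs_of_nonneg (dist_nonneg (x := x) (y := y)),
        mul_comm]
      rfl
    exact this.continuous
  refine ⟨⟨⟨fun t => f (t * dist x y), hc⟩, by simp [h0], by simp [h1]⟩, fun t => ?_⟩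
  change dist (f (t * dist x y)) y ≤ _
  have h2 : dist (f (t * dist x y)) y = dist (f (t * dist x y)) (f (dist x y)) := by rw [h1]
  rw [h2, hf _ (hm t) _ ⟨dist_nonneg, le_rfl⟩, abs_le]
  have := hm t
  constructor <;> linarith [this.1, this.2, dist_nonneg (x := x) (y := y)]

theorem coe_int_zero (k : ℤ) : (((k : ℤ) : ℝ) : AddCircle (1 : ℝ)) = 0 :=
  (AddCircle.coe_eq_zero_iff 1).2 ⟨k, by simp⟩

theorem circle_lift (u : ℝ) (θ : AddCircle (1 : ℝ)) :
    ∃ v : ℝ, (v : AddCircle (1 : ℝ)) = θ ∧ |v - u| = dist (u : AddCircle (1 : ℝ)) θ := by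
  obtain ⟨w, rfl⟩ := QuotientAddGroup.mk_surjective θ
  refine ⟨w - round (w - u), ?_, ?_⟩
  · rw [AddCircle.coe_sub, coe_int_zero, sub_zero]
  · rw [dist_comm, dist_eq_norm, ← AddCircle.coe_sub, UnitAddCircle.norm_eq]
    congr 1; ring

theorem circle_dist_le (u v : ℝ) : dist (u : AddCircle (1 : ℝ)) (v : AddCircle (1 : ℝ)) ≤ |u - v| := by
  rw [dist_eq_norm, ← AddCircle.coe_sub, UnitAddCircle.norm_eq]
  simpa using round_le (u - v) 0

theorem uniform_radius (hslsc : SemiLocallySimplyConnected X) (α : MLoop X) :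
    ∃ δ > (0 : ℝ), ∀ θ, ∀ γ : MLoop X, Set.range ⇑γ ⊆ Metric.ball (α θ) δ →
      NullHomotopicIn Set.univ γ := by
  choose r hr hr' using hslsc
  obtain ⟨δ, hδ, h⟩ := lebesgue_number_lemma_of_metric (isCompact_range α.continuous)
    (c := fun x : X => Metric.ball x (r x)) (fun _ => Metric.isOpen_ball)
    (fun x _ => mem_iUnion.2 ⟨x, Metric.mem_ball_self (hr x)⟩)
  refine ⟨δ, hδ, fun θ γ hγ => ?_⟩
  obtain ⟨i, hi⟩ := h (α θ) (mem_range_self θ)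
  exact hr' i γ (hγ.trans hi)

/-- the induction along a partition -/
theorem ladder {f g : C(ℝ, X)} (K : ∀ x y : X, Path x y) (t u : ℕ → ℝ)
    (h : ∀ i, pcl (segPath f (t i) (t (i + 1))) ≫ pcl (K (f (t (i + 1))) (g (u (i + 1)))) =
      pcl (K (f (t i)) (g (u i))) ≫ pcl (segPath g (u i) (u (i + 1)))) (n : ℕ) :
    pcl (segPath f (t 0) (t n)) ≫ pcl (K (f (t n)) (g (u n))) =
      pcl (K (f (t 0)) (g (u 0))) ≫ pcl (segPath g (u 0) (u n)) := by
  induction n with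
  | zero => rw [segPath_self, segPath_self]; simp
  | succ n ih =>
    rw [← segPath_trans f (t 0) (t n), ← segPath_trans g (u 0) (u n), Category.assoc, h n,
      ← Category.assoc, ih, Category.assoc]

theorem rotate_FH (α : MLoop X) (u : ℝ) (k : ℤ) (γ : MLoop X)
    (hγ : ∀ t : I, γ ((t : ℝ) : AddCircle (1 : ℝ)) = α ((u + t * k : ℝ) : AddCircle (1 : ℝ))) :
    ContinuousMap.Homotopic γ (loopPow α k) := by
  have hc : Continuous fun x : I × I => α (((1 - (x.1 : ℝ)) * u + x.2 * k : ℝ) : AddCircle (1 : ℝ)) := by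
    refine α.continuous.comp ((AddCircle.continuous_mk' 1).comp ?_)
    fun_prop
  refine FH_of_square ⟨_, hc⟩ (fun s => ?_) _ _ (fun t => ?_) (fun t => ?_)
  · simp [coe_int_zero]
  · rw [hγ]; simp
  · have : k • ((t : ℝ) : AddCircle (1 : ℝ)) = ((t * k : ℝ) : AddCircle (1 : ℝ)) := by
      rw [← AddCircle.coe_zsmul, zsmul_eq_mul, mul_comm]
    simp [loopPow, this]

theorem main_aux (hgeo : GeodesicSpace X) (hslsc : SemiLocallySimplyConnected X)
    (α : MLoop X) (c : ℝ) (hα : IsGeodesicCircle α c) :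
    ∃ ρ > (0 : ℝ), ∀ β : MLoop X,
      Set.range ⇑β ⊆ Metric.thickening ρ (Set.range ⇑α) →
      ∃ k : ℤ, FreelyHomotopic β (loopPow α k) := by
  obtain ⟨δ, hδ, hnull⟩ := uniform_radius hslsc α
  obtain ⟨ρ, hρ, hρδ⟩ : ∃ ρ > 0, 4 * ρ = δ := ⟨δ / 4, by positivity, by ring⟩
  refine ⟨ρ, hρ, fun β hβ => ?_⟩
  have hφ : ∀ z, ∃ θ, dist (β z) (α θ) < ρ := fun z => by
    obtain ⟨_, ⟨θ, rfl⟩, h⟩ := Metric.mem_thickening_iff.1 (hβ (mem_range_self z))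
    exact ⟨θ, h⟩
  choose φ hφ using hφ
  have : Fact ((0:ℝ) < 1) := ⟨one_pos⟩
  have huc : UniformContinuous β := CompactSpace.uniformContinuous_of_continuous β.continuous
  obtain ⟨η, hη, hβη⟩ := Metric.uniformContinuous_iff.1 huc ρ hρ
  obtain ⟨N, hN⟩ := exists_nat_one_div_lt hη
  choose K hK using geo_path hgeo
  choose lf hlf hlf' using circle_lift
  let f : C(ℝ, X) := ⟨fun t => β (t : AddCircle (1 : ℝ)), β.continuous.comp (AddCircle.continuous_mk' 1)⟩
  let g : C(ℝ, X) := ⟨fun t => α (t : AddCircle (1 : ℝ)), α.continuous.comp (AddCircle.continuous_mk' 1)⟩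
  let t : ℕ → ℝ := fun i => (i : ℝ) / ((N : ℝ) + 1)
  obtain ⟨u, hu0, hus⟩ : ∃ u : ℕ → ℝ, u 0 = lf 0 (φ ((t 0 : ℝ) : AddCircle (1 : ℝ))) ∧
      ∀ i, u (i + 1) = lf (u i) (φ ((t (i + 1) : ℝ) : AddCircle (1 : ℝ))) :=
    ⟨fun n => Nat.rec (lf 0 (φ ((t 0 : ℝ) : AddCircle (1 : ℝ))))
      (fun i v => lf v (φ ((t (i + 1) : ℝ) : AddCircle (1 : ℝ)))) n, rfl, fun i => rfl⟩
  have hu : ∀ i, (u i : AddCircle (1 : ℝ)) = φ ((t i : ℝ) : AddCircle (1 : ℝ)) := by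
    intro i
    cases i with
    | zero => rw [hu0, hlf]
    | succ i => rw [hus, hlf]
  have hu' : ∀ i, |u (i + 1) - u i| = dist (u i : AddCircle (1 : ℝ)) (u (i + 1) : AddCircle (1 : ℝ)) := by
    intro i
    rw [hu (i + 1), hus]
    exact hlf' _ _
  have hfg : ∀ i, dist (f (t i)) (g (u i)) < ρ := by
    intro i
    change dist (β _) (α _) < ρ
    rw [hu]
    exact hφ _
  have hdt : ∀ i, |t (i + 1) - t i| < η := by
    intro i
    have : t (i + 1) - t i = 1 / ((N : ℝ) + 1) := by
      simp only [t]
      push_cast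
      ring
    rw [this, abs_of_pos (by positivity)]
    exact hN
  have hfseg : ∀ i r, dist (segPath f (t i) (t (i + 1)) r) (f (t i)) < ρ := by
    intro i r
    apply hβη
    exact (circle_dist_le _ _).trans_lt ((linePath_bound _ _ r).trans_lt (hdt i))
  have hgg : ∀ i, dist (g (u i)) (g (u (i + 1))) < 3 * ρ := by
    intro i
    have h1 := hfseg i 1
    rw [Path.target] at h1
    have h2 := dist_triangle4 (g (u i)) (f (t i)) (f (t (i + 1))) (g (u (i + 1)))
    rw [dist_comm (g (u i)) (f _), dist_comm (f (t i)) (f _)] at h2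
    linarith [hfg i, hfg (i + 1)]
  have hgseg : ∀ i r, dist (segPath g (u i) (u (i + 1)) r) (g (u i)) < 3 * ρ := by
    intro i r
    refine lt_of_le_of_lt ?_ (hgg i)
    change dist (α _) (α _) ≤ dist (α _) (α _)
    rw [hα.2, hα.2, ← hu']
    exact mul_le_mul_of_nonneg_left ((circle_dist_le _ _).trans (linePath_bound _ _ r)) hα.1.le
  have hstep : ∀ i, pcl (segPath f (t i) (t (i + 1))) ≫ pcl (K (f (t (i + 1))) (g (u (i + 1)))) =
      pcl (K (f (t i)) (g (u i))) ≫ pcl (segPath g (u i) (u (i + 1))) := by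
    intro i
    rw [← pcl_trans, ← pcl_trans]
    refine small_paths (hnull (u i : AddCircle (1 : ℝ))) _ _ (fun r => ?_) (fun r => ?_)
    · rw [Path.trans_apply, Metric.mem_ball]
      change dist _ (g (u i)) < δ
      split_ifs
      · refine (dist_triangle _ (f (t i)) _).trans_lt ?_
        linarith [hfseg i ⟨2 * (r : ℝ), (unitInterval.mul_pos_mem_iff zero_lt_two).2 ⟨r.2.1, by assumption⟩⟩, hfg i]
      · refine (dist_triangle _ (g (u (i + 1))) _).trans_lt ?_
        have h1 := hgg i
        rw [dist_comm] at h1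
        have h2 := hfg (i + 1)
        exact (add_lt_add ((hK (f (t (i + 1))) (g (u (i + 1))) _).trans_lt h2) h1).trans_le (by linarith)
    · rw [Path.trans_apply, Metric.mem_ball]
      change dist _ (g (u i)) < δ
      split_ifs
      · exact ((hK _ _ _).trans_lt (hfg i)).trans (by linarith)
      · exact (hgseg i _).trans (by linarith)
  have hlad := ladder K t u hstep (N + 1)
  have ht0 : t 0 = 0 := by simp [t]
  have ht1 : t (N + 1) = 1 := by
    simp only [t]
    push_cast
    exact div_self (by positivity)
  have hend : (u (N + 1) : AddCircle (1 : ℝ)) = (u 0 : AddCircle (1 : ℝ)) := by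
    rw [hu, hu, ht0, ht1, AddCircle.coe_period, AddCircle.coe_zero]
  obtain ⟨k, hk⟩ : ∃ k : ℤ, (k : ℝ) = u (N + 1) - u 0 := by
    have : ((u (N + 1) - u 0 : ℝ) : AddCircle (1 : ℝ)) = 0 := by
      rw [AddCircle.coe_sub, hend, sub_self]
    obtain ⟨k, hk⟩ := (AddCircle.coe_eq_zero_iff 1).1 this
    exact ⟨k, by simpa using hk⟩
  have hab : f (t 0) = f (t (N + 1)) := by
    rw [ht0, ht1]
    change β ((0 : ℝ) : AddCircle (1 : ℝ)) = β ((1 : ℝ) : AddCircle (1 : ℝ))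
    rw [AddCircle.coe_period, AddCircle.coe_zero]
  have hcd : g (u 0) = g (u (N + 1)) := by
    change α _ = α _
    rw [hend]
  have hγc : Continuous fun z : AddCircle (1 : ℝ) => α ((u 0 : AddCircle (1 : ℝ)) + k • z) := by
    refine α.continuous.comp ?_
    exact Continuous.fun_add continuous_const (continuous_zsmul k)
  have hz : ∀ r : ℝ, k • (r : AddCircle (1 : ℝ)) = ((r * k : ℝ) : AddCircle (1 : ℝ)) := by
    intro r
    rw [← AddCircle.coe_zsmul, zsmul_eq_mul, mul_comm]
  have hγ : ∀ r : I, (⟨_, hγc⟩ : MLoop X) ((r : ℝ) : AddCircle (1 : ℝ)) =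
      α ((u 0 + r * k : ℝ) : AddCircle (1 : ℝ)) := by
    intro r
    change α _ = α _
    rw [hz, AddCircle.coe_add]
  refine ⟨k, FH_iff.2 (ContinuousMap.Homotopic.trans ?_ (rotate_FH α (u 0) k ⟨_, hγc⟩ hγ))⟩
  refine FH_main _ _ _ _ hab hcd (fun s => ?_) hlad _ _ (fun r => ?_) (fun r => ?_)
  · rw [← hab, ← hcd]
  · change β _ = β ((t 0 + r * (t (N + 1) - t 0) : ℝ) : AddCircle (1 : ℝ))
    rw [ht0, ht1]
    simp
  · rw [hγ, hk]
    rfl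

end Helpers

section Statement

variable {X : Type*} [MetricSpace X]

/-- Lemma 2.2. -/
theorem stmt1 (hgeo : GeodesicSpace X) (hslsc : SemiLocallySimplyConnected X)
    (α : MLoop X) (c : ℝ) (hα : IsGeodesicCircle α c) :
    ∃ ρ > (0 : ℝ), ∀ β : MLoop X,
      Set.range ⇑β ⊆ Metric.thickening ρ (Set.range ⇑α) →
      ∃ k : ℤ, FreelyHomotopic β (loopPow α k) := by
  exact main_aux hgeo hslsc α c hα

end Statement

end
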